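/- arXiv:1805.09114 — 2 statements merged into one kernel-verified Lean document; each statement's English description precedes it below -/
import Mathlib

section
/- (Interpolation, α → 1.) Let h ∈ Σ_n, g ∈ Σ_m, M ∈ ℝ^{n×m} a matrix with nonnegative entries, C₁ ∈ ℝ^{n×n}, C₂ ∈ ℝ^{m×m} and q ≥ 1. Define for each α ∈ [0,1] the value FGW_{q,α} = min_{π ∈ Π(h,g)} E_q(M,C₁,C₂,π). Then the limit of FGW_{q,α} as α → 1 equals the Gromov-Wasserstein value GW_q^q = min_{π ∈ Π(h,g)} J_q(C₁,C₂,π). -/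
open Finset

/-- `h` is a positive histogram (element of the open simplex Σₙ). -/
def IsSimplex {n : ℕ} (h : Fin n → ℝ) : Prop :=
  (∀ i, 0 < h i) ∧ ∑ i, h i = 1

/-- The set `Π(h,g)` of admissible couplings between histograms `h` and `g`. -/
def Couplings {n m : ℕ} (h : Fin n → ℝ) (g : Fin m → ℝ) :
    Set (Matrix (Fin n) (Fin m) ℝ) :=
  {π | (∀ i j, 0 ≤ π i j) ∧ (∀ i, ∑ j, π i j = h i) ∧ (∀ j, ∑ i, π i j = g j)}

/-- Wasserstein loss `H_q(M, π) = Σ_{i,j} M_{ij}^q π_{ij}`. -/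
noncomputable def Hloss {n m : ℕ} (q : ℝ) (M π : Matrix (Fin n) (Fin m) ℝ) : ℝ :=
  ∑ i, ∑ j, M i j ^ q * π i j

/-- Gromov–Wasserstein loss `J_q(C₁, C₂, π) = Σ_{i,j,k,l} |C₁(i,k)-C₂(j,l)|^q π_{ij} π_{kl}`. -/
noncomputable def Jloss {n m : ℕ} (q : ℝ) (C1 : Matrix (Fin n) (Fin n) ℝ)
    (C2 : Matrix (Fin m) (Fin m) ℝ) (π : Matrix (Fin n) (Fin m) ℝ) : ℝ :=
  ∑ i, ∑ j, ∑ k, ∑ l, |C1 i k - C2 j l| ^ q * π i j * π k l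

/-- FGW loss `E_q = (1-α) H_q + α J_q`. -/
noncomputable def Eloss {n m : ℕ} (q α : ℝ) (M : Matrix (Fin n) (Fin m) ℝ)
    (C1 : Matrix (Fin n) (Fin n) ℝ) (C2 : Matrix (Fin m) (Fin m) ℝ)
    (π : Matrix (Fin n) (Fin m) ℝ) : ℝ :=
  (1 - α) * Hloss q M π + α * Jloss q C1 C2 π

open Filter Topology

/-!
The set of couplings is compact and the FGW loss is jointly continuous in `(α, π)`, so the minimum
over couplings is a continuous function of `α`. At `α = 1` the FGW loss is the Gromov–Wasserstein
loss.
-/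

section Couplings

variable {n m : ℕ} {h : Fin n → ℝ} {g : Fin m → ℝ}

theorem IsSimplex.mem_stdSimplex (hh : IsSimplex h) : h ∈ stdSimplex ℝ (Fin n) :=
  ⟨fun i => (hh.1 i).le, hh.2⟩

theorem vecMulVec_mem_couplings (hh : h ∈ stdSimplex ℝ (Fin n)) (hg : g ∈ stdSimplex ℝ (Fin m)) :
    Matrix.vecMulVec h g ∈ Couplings h g := by
  refine ⟨fun i j => mul_nonneg (hh.1 i) (hg.1 j), fun i => ?_, fun j => ?_⟩
  · simp only [Matrix.vecMulVec_apply, ← mul_sum, hg.2, mul_one]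
  · simp only [Matrix.vecMulVec_apply, ← sum_mul, hh.2, one_mul]

theorem Couplings.apply_le {π : Matrix (Fin n) (Fin m) ℝ} (hπ : π ∈ Couplings h g)
    (i : Fin n) (j : Fin m) : π i j ≤ h i :=
  hπ.2.1 i ▸ single_le_sum (fun l _ => hπ.1 i l) (mem_univ j)

variable (h g)

theorem isClosed_couplings : IsClosed (Couplings h g) := by
  simp only [Couplings, Set.ofPred_and, Set.ofPred_forall]
  refine .inter ?nonneg (.inter ?row_sums ?column_sums)
  case nonneg =>
    exact isClosed_iInter fun i => isClosed_iInter fun j =>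
      isClosed_le continuous_const (continuous_id.matrix_elem i j)
  case row_sums => exact isClosed_iInter fun i => isClosed_eq (by fun_prop) continuous_const
  case column_sums => exact isClosed_iInter fun j => isClosed_eq (by fun_prop) continuous_const

theorem isCompact_couplings : IsCompact (Couplings h g) := by
  have box_compact : IsCompact (Set.univ.pi fun i => Set.univ.pi fun _ => Set.Icc 0 (h i) :
      Set (Matrix (Fin n) (Fin m) ℝ)) :=
    isCompact_univ_pi fun _ => isCompact_univ_pi fun _ => isCompact_Icc
  exact box_compact.of_isClosed_subset (isClosed_couplings h g) fun π hπ i _ j _ =>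
    ⟨hπ.1 i j, Couplings.apply_le hπ i j⟩

end Couplings

section Losses

variable {n m : ℕ} (q : ℝ) (M : Matrix (Fin n) (Fin m) ℝ)
  (C1 : Matrix (Fin n) (Fin n) ℝ) (C2 : Matrix (Fin m) (Fin m) ℝ)

theorem continuous_Hloss : Continuous (Hloss q M) := by
  unfold Hloss
  fun_prop

theorem continuous_Jloss : Continuous (Jloss q C1 C2) := by
  unfold Jloss
  fun_prop

theorem continuous_Eloss :
    Continuous fun p : ℝ × Matrix (Fin n) (Fin m) ℝ => Eloss q p.1 M C1 C2 p.2 := by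
  have continuous_H := continuous_Hloss q M
  have continuous_J := continuous_Jloss q C1 C2
  unfold Eloss
  fun_prop

theorem Eloss_one : Eloss q 1 M C1 C2 = Jloss q C1 C2 := by
  funext π
  simp only [Eloss, sub_self, zero_mul, one_mul, zero_add]

end Losses

section Values

variable {n m : ℕ} {h : Fin n → ℝ} {g : Fin m → ℝ} {M : Matrix (Fin n) (Fin m) ℝ}
  {C1 : Matrix (Fin n) (Fin n) ℝ} {C2 : Matrix (Fin m) (Fin m) ℝ} {q : ℝ}

theorem isLeast_sInf_image_couplings {L : Matrix (Fin n) (Fin m) ℝ → ℝ}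
    (hne : (Couplings h g).Nonempty) (hL : Continuous L) :
    IsLeast (L '' Couplings h g) (sInf (L '' Couplings h g)) :=
  ((isCompact_couplings h g).image hL).isLeast_sInf (hne.image L)

theorem isLeast_sInf_Eloss (hne : (Couplings h g).Nonempty) (α : ℝ) :
    IsLeast (Eloss q α M C1 C2 '' Couplings h g) (sInf (Eloss q α M C1 C2 '' Couplings h g)) :=
  isLeast_sInf_image_couplings hne
    ((continuous_Eloss q M C1 C2).comp (Continuous.prodMk_right α))

theorem isLeast_sInf_Jloss (hne : (Couplings h g).Nonempty) :
    IsLeast (Jloss q C1 C2 '' Couplings h g) (sInf (Jloss q C1 C2 '' Couplings h g)) :=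
  isLeast_sInf_image_couplings hne (continuous_Jloss q C1 C2)

theorem continuous_of_isLeast_Eloss {fgw : ℝ → ℝ}
    (hfgw : ∀ α, IsLeast (Eloss q α M C1 C2 '' Couplings h g) (fgw α)) : Continuous fgw := by
  simpa only [(hfgw _).csInf_eq] using
    (isCompact_couplings h g).continuous_sInf (f := fun α => Eloss q α M C1 C2)
      (continuous_Eloss q M C1 C2)

theorem fgw_tendsto_gromov_general {fgw : ℝ → ℝ} {gw : ℝ}
    (hfgw : ∀ α, IsLeast (Eloss q α M C1 C2 '' Couplings h g) (fgw α))
    (hgw : IsLeast (Jloss q C1 C2 '' Couplings h g) gw) :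
    Tendsto fgw (𝓝 1) (𝓝 gw) := by
  have fgw_one : fgw 1 = gw := (Eloss_one q M C1 C2 ▸ hfgw 1).unique hgw
  exact fgw_one ▸ (continuous_of_isLeast_Eloss hfgw).tendsto 1

end Values

/-- interpolation, `α → 1`: the FGW value tends to the
Gromov–Wasserstein value `GW_q^q` as the trade-off parameter `α ∈ [0,1]` tends to `1`. -/
theorem fgw_tendsto_gromov {n m : ℕ} (hn : 1 ≤ n) (hm : 1 ≤ m)
    (h : Fin n → ℝ) (g : Fin m → ℝ) (hh : IsSimplex h) (hg : IsSimplex g)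
    (M : Matrix (Fin n) (Fin m) ℝ) (hM : ∀ i j, 0 ≤ M i j)
    (C1 : Matrix (Fin n) (Fin n) ℝ) (C2 : Matrix (Fin m) (Fin m) ℝ)
    (q : ℝ) (hq : 1 ≤ q) :
    Tendsto (fun α : ℝ => sInf (Eloss q α M C1 C2 '' Couplings h g))
      (𝓝[Set.Icc (0 : ℝ) 1] 1)
      (𝓝 (sInf (Jloss q C1 C2 '' Couplings h g))) := by
  have hne : (Couplings h g).Nonempty :=
    ⟨_, vecMulVec_mem_couplings hh.mem_stdSimplex hg.mem_stdSimplex⟩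
  exact (fgw_tendsto_gromov_general (isLeast_sInf_Eloss hne) (isLeast_sInf_Jloss hne)).mono_left
    nhdsWithin_le_nhds
end

section
/- (Relaxed triangle inequality for q > 1.) Let (Ω_f, d) be a metric space, q > 1 a real number and α ∈ [0,1]. Let h ∈ Σ_n, g ∈ Σ_m, f ∈ Σ_k be positive histograms with associated features a₁,…,a_n, b₁,…,b_m, c₁,…,c_k ∈ Ω_f and matrices C₁ ∈ ℝ^{n×n}, C₂ ∈ ℝ^{m×m}, C₃ ∈ ℝ^{k×k}. Write FGW_q(μ,ν) = min_{π ∈ Π(h,g)} Σ_{i,j,k',l} ((1−α)·d(a_i,b_j)^q + α·|C₁(i,k')−C₂(j,l)|^q)·π_{ij}·π_{k'l}, and define FGW_q(ν,γ) and FGW_q(μ,γ) analogously. Then FGW_q(μ,γ) ≤ 2^{q−1}·(FGW_q(μ,ν) + FGW_q(ν,γ)). -/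
open Finset

/-- The FGW value of order `q` between two structured data given by features,
structure matrices and histograms. -/
noncomputable def FGWq {Ωf : Type*} [MetricSpace Ωf] (q α : ℝ) {n m : ℕ}
    (a : Fin n → Ωf) (b : Fin m → Ωf)
    (C1 : Matrix (Fin n) (Fin n) ℝ) (C2 : Matrix (Fin m) (Fin m) ℝ)
    (h : Fin n → ℝ) (g : Fin m → ℝ) : ℝ :=
  sInf ((fun π : Matrix (Fin n) (Fin m) ℝ =>
    ∑ i, ∑ j, ∑ k', ∑ l,
      ((1 - α) * dist (a i) (b j) ^ q + α * |C1 i k' - C2 j l| ^ q) * π i j * π k' l) ''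
    Couplings h g)

/-!
Glue plans `p` between `μ, ν` and `r` between `ν, γ` along their common marginal into a three-way
plan `T`, whose first-third marginal is a plan between `μ, γ`. The losses of all three plans are
double integrals against `T`, so a relaxed triangle inequality between the costs integrates to one
between the losses. For the fused cost it comes from convexity,
`(x + y) ^ q ≤ 2 ^ (q - 1) * (x ^ q + y ^ q)`.
-/

open scoped Pointwise

section QuadraticLoss

variable {ι κ ρ τ : Type*} [Fintype ι] [Fintype κ] [Fintype ρ] [Fintype τ]

/-- The loss of a plan `π` that is quadratic in `π`: the double integral against `π ⊗ π` of a cost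
`L i j i' j'` for matching `i` with `j` and `i'` with `j'`. -/
def quadraticLoss (L : ι → κ → ι → κ → ℝ) (π : Matrix ι κ ℝ) : ℝ :=
  ∑ i, ∑ j, ∑ i', ∑ j', L i j i' j' * π i j * π i' j'

theorem quadraticLoss_nonneg {L : ι → κ → ι → κ → ℝ} {π : Matrix ι κ ℝ}
    (hL : ∀ i j i' j', 0 ≤ L i j i' j') (hπ : ∀ i j, 0 ≤ π i j) : 0 ≤ quadraticLoss L π :=
  Finset.sum_nonneg fun i _ => Finset.sum_nonneg fun j _ => Finset.sum_nonneg fun i' _ =>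
    Finset.sum_nonneg fun j' _ => mul_nonneg (mul_nonneg (hL i j i' j') (hπ i j)) (hπ i' j')

-- The hypothesis says that `π` is the image of `T` under `(φ, ψ)`, tested against functions.
theorem quadraticLoss_eq_sum_sum_mul {φ : τ → ι} {ψ : τ → κ} {T : τ → ℝ} {π : Matrix ι κ ℝ}
    (hπ : ∀ F : ι → κ → ℝ, ∑ i, ∑ j, F i j * π i j = ∑ t, F (φ t) (ψ t) * T t)
    (L : ι → κ → ι → κ → ℝ) :
    quadraticLoss L π = ∑ t, ∑ t', L (φ t) (ψ t) (φ t') (ψ t') * (T t * T t') :=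
  calc
    quadraticLoss L π = ∑ i, ∑ j, (∑ i', ∑ j', L i j i' j' * π i' j') * π i j := by
      simp only [quadraticLoss, Finset.sum_mul, mul_right_comm _ (π _ _) (π _ _)]
    _ = ∑ t, (∑ t', L (φ t) (ψ t) (φ t') (ψ t') * T t') * T t := by simp only [hπ]
    _ = ∑ t, ∑ t', L (φ t) (ψ t) (φ t') (ψ t') * (T t * T t') := by
      simp only [Finset.sum_mul, mul_assoc, mul_comm (T _) (T _)]

/-- The first-second marginal of a three-way plan. -/
def marginal₁₂ (T : ι × κ × ρ → ℝ) : Matrix ι κ ℝ := .of fun i j => ∑ e, T (i, j, e)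

/-- The second-third marginal of a three-way plan. -/
def marginal₂₃ (T : ι × κ × ρ → ℝ) : Matrix κ ρ ℝ := .of fun j e => ∑ i, T (i, j, e)

/-- The first-third marginal of a three-way plan. -/
def marginal₁₃ (T : ι × κ × ρ → ℝ) : Matrix ι ρ ℝ := .of fun i e => ∑ j, T (i, j, e)

theorem sum_mul_marginal₁₂ (T : ι × κ × ρ → ℝ) (F : ι → κ → ℝ) :
    ∑ i, ∑ j, F i j * marginal₁₂ T i j = ∑ t, F t.1 t.2.1 * T t := by
  simp only [marginal₁₂, Matrix.of_apply, Fintype.sum_prod_type, Finset.mul_sum]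

theorem sum_mul_marginal₂₃ (T : ι × κ × ρ → ℝ) (F : κ → ρ → ℝ) :
    ∑ j, ∑ e, F j e * marginal₂₃ T j e = ∑ t, F t.2.1 t.2.2 * T t := by
  simp only [marginal₂₃, Matrix.of_apply, Finset.mul_sum]
  rw [Fintype.sum_prod_type_right, Fintype.sum_prod_type]

theorem sum_mul_marginal₁₃ (T : ι × κ × ρ → ℝ) (F : ι → ρ → ℝ) :
    ∑ i, ∑ e, F i e * marginal₁₃ T i e = ∑ t, F t.1 t.2.2 * T t := by
  simp only [marginal₁₃, Matrix.of_apply, Fintype.sum_prod_type, Finset.mul_sum]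
  exact Finset.sum_congr rfl fun i _ => Finset.sum_comm

theorem quadraticLoss_marginal₁₃_le {K : ℝ} {T : ι × κ × ρ → ℝ} {L₁₂ : ι → κ → ι → κ → ℝ}
    {L₂₃ : κ → ρ → κ → ρ → ℝ} {L₁₃ : ι → ρ → ι → ρ → ℝ} (hT : ∀ t, 0 ≤ T t)
    (hL : ∀ i j e i' j' e', L₁₃ i e i' e' ≤ K * (L₁₂ i j i' j' + L₂₃ j e j' e')) :
    quadraticLoss L₁₃ (marginal₁₃ T) ≤
      K * (quadraticLoss L₁₂ (marginal₁₂ T) + quadraticLoss L₂₃ (marginal₂₃ T)) := by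
  rw [quadraticLoss_eq_sum_sum_mul (sum_mul_marginal₁₃ T),
    quadraticLoss_eq_sum_sum_mul (sum_mul_marginal₁₂ T),
    quadraticLoss_eq_sum_sum_mul (sum_mul_marginal₂₃ T)]
  simp only [← Finset.sum_add_distrib, Finset.mul_sum, ← add_mul, ← mul_assoc K]
  gcongr with t _ t' _
  · exact mul_nonneg (hT t) (hT t')
  · exact hL ..

end QuadraticLoss

section Couplings

variable {n m k : ℕ} {h : Fin n → ℝ} {g : Fin m → ℝ} {f : Fin k → ℝ}

theorem couplings_nonempty (hh : ∀ i, 0 ≤ h i) (hg : ∀ j, 0 ≤ g j) (hhg : ∑ i, h i = ∑ j, g j) :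
    (Couplings h g).Nonempty := by
  refine ⟨fun i j => h i * g j / ∑ i, h i, fun i j => ?_, fun i => ?_, fun j => ?_⟩
  · exact div_nonneg (mul_nonneg (hh i) (hg j)) (Finset.sum_nonneg fun i _ => hh i)
  · rw [← Finset.sum_div, ← Finset.mul_sum, ← hhg]
    refine mul_div_cancel_of_imp fun hsum => ?_
    exact congrFun ((Fintype.sum_eq_zero_iff_of_nonneg hh).1 hsum) i
  · rw [← Finset.sum_div, ← Finset.sum_mul]
    refine mul_div_cancel_left_of_imp fun hsum => ?_
    exact congrFun ((Fintype.sum_eq_zero_iff_of_nonneg hg).1 (hhg ▸ hsum)) j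

theorem IsSimplex.couplings_nonempty (hh : IsSimplex h) (hg : IsSimplex g) :
    (Couplings h g).Nonempty :=
  _root_.couplings_nonempty (fun i => (hh.1 i).le) (fun j => (hg.1 j).le) (hh.2.trans hg.2.symm)

-- Where `g j = 0`, the plans vanish as well, so the junk value of the quotient is the right one.
theorem exists_gluing {p : Matrix (Fin n) (Fin m) ℝ} {r : Matrix (Fin m) (Fin k) ℝ}
    (hp : p ∈ Couplings h g) (hr : r ∈ Couplings g f) :
    ∃ T : Fin n × Fin m × Fin k → ℝ, (∀ t, 0 ≤ T t) ∧ marginal₁₂ T = p ∧ marginal₂₃ T = r := by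
  obtain ⟨hp_nonneg, -, hp_snd⟩ := hp
  obtain ⟨hr_nonneg, hr_fst, -⟩ := hr
  have hg (j : Fin m) : 0 ≤ g j := hp_snd j ▸ Finset.sum_nonneg fun i _ => hp_nonneg i j
  refine ⟨fun (i, j, e) => p i j * r j e / g j, fun (i, j, e) => ?_, ?_, ?_⟩
  · exact div_nonneg (mul_nonneg (hp_nonneg _ _) (hr_nonneg _ _)) (hg _)
  · ext i j
    simp only [marginal₁₂, Matrix.of_apply, ← Finset.sum_div, ← Finset.mul_sum, hr_fst]
    refine mul_div_cancel_of_imp fun hgj => ?_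
    exact congrFun ((Fintype.sum_eq_zero_iff_of_nonneg fun i => hp_nonneg i j).1
      ((hp_snd j).trans hgj)) i
  · ext j e
    simp only [marginal₂₃, Matrix.of_apply, ← Finset.sum_div, ← Finset.sum_mul, hp_snd]
    refine mul_div_cancel_left_of_imp fun hgj => ?_
    exact congrFun ((Fintype.sum_eq_zero_iff_of_nonneg (hr_nonneg j)).1
      ((hr_fst j).trans hgj)) e

theorem marginal₁₃_mem_couplings {T : Fin n × Fin m × Fin k → ℝ} (hT : ∀ t, 0 ≤ T t)
    (hp : marginal₁₂ T ∈ Couplings h g) (hr : marginal₂₃ T ∈ Couplings g f) :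
    marginal₁₃ T ∈ Couplings h f := by
  refine ⟨fun i e => ?_, fun i => ?_, fun e => ?_⟩
  · exact (Finset.sum_nonneg fun j _ => hT (i, j, e) : 0 ≤ ∑ j, T (i, j, e))
  · rw [← hp.2.1 i]
    simp only [marginal₁₃, marginal₁₂, Matrix.of_apply]
    exact Finset.sum_comm
  · rw [← hr.2.2 e]
    simp only [marginal₁₃, marginal₂₃, Matrix.of_apply]
    exact Finset.sum_comm

theorem bddBelow_quadraticLoss_image_couplings {L : Fin n → Fin m → Fin n → Fin m → ℝ}
    (hL : ∀ i j i' j', 0 ≤ L i j i' j') : BddBelow (quadraticLoss L '' Couplings h g) :=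
  ⟨0, Set.forall_mem_image.2 fun _ hπ => quadraticLoss_nonneg hL hπ.1⟩

theorem sInf_quadraticLoss_image_couplings_le {K : ℝ} (hK : 0 < K)
    {L₁₂ : Fin n → Fin m → Fin n → Fin m → ℝ} {L₂₃ : Fin m → Fin k → Fin m → Fin k → ℝ}
    {L₁₃ : Fin n → Fin k → Fin n → Fin k → ℝ}
    (hL₁₂ : ∀ i j i' j', 0 ≤ L₁₂ i j i' j') (hL₂₃ : ∀ j e j' e', 0 ≤ L₂₃ j e j' e')
    (hL₁₃ : ∀ i e i' e', 0 ≤ L₁₃ i e i' e')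
    (hL : ∀ i j e i' j' e', L₁₃ i e i' e' ≤ K * (L₁₂ i j i' j' + L₂₃ j e j' e'))
    (hhg : (Couplings h g).Nonempty) (hgf : (Couplings g f).Nonempty) :
    sInf (quadraticLoss L₁₃ '' Couplings h f) ≤
      K * (sInf (quadraticLoss L₁₂ '' Couplings h g) +
        sInf (quadraticLoss L₂₃ '' Couplings g f)) := by
  rw [← div_le_iff₀' hK, ← csInf_add (hhg.image _) (bddBelow_quadraticLoss_image_couplings hL₁₂)
    (hgf.image _) (bddBelow_quadraticLoss_image_couplings hL₂₃)]
  refine le_csInf ((hhg.image _).add (hgf.image _)) ?_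
  rintro _ ⟨_, ⟨p, hp, rfl⟩, _, ⟨r, hr, rfl⟩, rfl⟩
  obtain ⟨T, hT, rfl, rfl⟩ := exists_gluing hp hr
  rw [div_le_iff₀' hK]
  have hle : sInf (quadraticLoss L₁₃ '' Couplings h f) ≤ quadraticLoss L₁₃ (marginal₁₃ T) :=
    csInf_le (bddBelow_quadraticLoss_image_couplings hL₁₃)
      (Set.mem_image_of_mem _ (marginal₁₃_mem_couplings hT hp hr))
  exact hle.trans (quadraticLoss_marginal₁₃_le hT hL)

end Couplings

section FusedCost

theorem rpow_le_two_rpow_mul_of_le_add {q x y z : ℝ} (hq : 1 ≤ q) (hx : 0 ≤ x) (hy : 0 ≤ y)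
    (hz : 0 ≤ z) (hzxy : z ≤ x + y) : z ^ q ≤ 2 ^ (q - 1) * (x ^ q + y ^ q) :=
  calc
    z ^ q ≤ (x + y) ^ q := Real.rpow_le_rpow hz hzxy (zero_le_one.trans hq)
    _ ≤ 2 ^ (q - 1) * (x ^ q + y ^ q) := by
      lift x to NNReal using hx
      lift y to NNReal using hy
      exact_mod_cast NNReal.rpow_add_le_mul_rpow_add_rpow x y hq

variable {Ωf : Type*} [PseudoMetricSpace Ωf] {ι κ ρ : Type*} {q α : ℝ}

/-- The integrand of the fused Gromov–Wasserstein loss: the cost of matching `i` with `j` and `i'`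
with `j'`. The feature term depends on the first pair only. -/
noncomputable def fusedCost (q α : ℝ) (a : ι → Ωf) (b : κ → Ωf) (C₁ : Matrix ι ι ℝ)
    (C₂ : Matrix κ κ ℝ) (i : ι) (j : κ) (i' : ι) (j' : κ) : ℝ :=
  (1 - α) * dist (a i) (b j) ^ q + α * |C₁ i i' - C₂ j j'| ^ q

theorem fusedCost_nonneg (hα : α ∈ Set.Icc (0 : ℝ) 1) (a : ι → Ωf) (b : κ → Ωf)
    (C₁ : Matrix ι ι ℝ) (C₂ : Matrix κ κ ℝ) (i : ι) (j : κ) (i' : ι) (j' : κ) :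
    0 ≤ fusedCost q α a b C₁ C₂ i j i' j' :=
  add_nonneg (mul_nonneg (sub_nonneg.2 hα.2) (by positivity)) (mul_nonneg hα.1 (by positivity))

theorem fusedCost_le (hq : 1 ≤ q) (hα : α ∈ Set.Icc (0 : ℝ) 1) (a : ι → Ωf) (b : κ → Ωf)
    (c : ρ → Ωf) (C₁ : Matrix ι ι ℝ) (C₂ : Matrix κ κ ℝ) (C₃ : Matrix ρ ρ ℝ) (i : ι) (j : κ)
    (e : ρ) (i' : ι) (j' : κ) (e' : ρ) :
    fusedCost q α a c C₁ C₃ i e i' e' ≤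
      2 ^ (q - 1) * (fusedCost q α a b C₁ C₂ i j i' j' + fusedCost q α b c C₂ C₃ j e j' e') := by
  have hdist : dist (a i) (c e) ^ q ≤
      2 ^ (q - 1) * (dist (a i) (b j) ^ q + dist (b j) (c e) ^ q) :=
    rpow_le_two_rpow_mul_of_le_add hq dist_nonneg dist_nonneg dist_nonneg (dist_triangle ..)
  have habs : |C₁ i i' - C₃ e e'| ^ q ≤
      2 ^ (q - 1) * (|C₁ i i' - C₂ j j'| ^ q + |C₂ j j' - C₃ e e'| ^ q) :=
    rpow_le_two_rpow_mul_of_le_add hq (abs_nonneg _) (abs_nonneg _) (abs_nonneg _)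
      (abs_sub_le ..)
  unfold fusedCost
  linarith [mul_le_mul_of_nonneg_left hdist (sub_nonneg.2 hα.2),
    mul_le_mul_of_nonneg_left habs hα.1]

end FusedCost

theorem fgw_relaxed_triangle_inequality_general {Ωf : Type*} [MetricSpace Ωf] {n m k : ℕ}
    {q α : ℝ} (hq : 1 ≤ q) (hα : α ∈ Set.Icc (0 : ℝ) 1)
    {h : Fin n → ℝ} {g : Fin m → ℝ} {f : Fin k → ℝ}
    (hhg : (Couplings h g).Nonempty) (hgf : (Couplings g f).Nonempty)
    (a : Fin n → Ωf) (b : Fin m → Ωf) (c : Fin k → Ωf)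
    (C1 : Matrix (Fin n) (Fin n) ℝ) (C2 : Matrix (Fin m) (Fin m) ℝ)
    (C3 : Matrix (Fin k) (Fin k) ℝ) :
    FGWq q α a c C1 C3 h f ≤
      (2 : ℝ) ^ (q - 1) * (FGWq q α a b C1 C2 h g + FGWq q α b c C2 C3 g f) :=
  sInf_quadraticLoss_image_couplings_le (by positivity) (fusedCost_nonneg hα a b C1 C2)
    (fusedCost_nonneg hα b c C2 C3) (fusedCost_nonneg hα a c C1 C3)
    (fusedCost_le hq hα a b c C1 C2 C3) hhg hgf

/-- relaxed triangle inequality for `q > 1`: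
`FGW_q(μ,γ) ≤ 2^{q-1} (FGW_q(μ,ν) + FGW_q(ν,γ))`. -/
theorem fgw_relaxed_triangle_inequality {Ωf : Type*} [MetricSpace Ωf] {n m k : ℕ}
    (q α : ℝ) (hq : 1 < q) (hα : α ∈ Set.Icc (0 : ℝ) 1)
    (h : Fin n → ℝ) (g : Fin m → ℝ) (f : Fin k → ℝ)
    (hh : IsSimplex h) (hg : IsSimplex g) (hf : IsSimplex f)
    (a : Fin n → Ωf) (b : Fin m → Ωf) (c : Fin k → Ωf)
    (C1 : Matrix (Fin n) (Fin n) ℝ) (C2 : Matrix (Fin m) (Fin m) ℝ)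
    (C3 : Matrix (Fin k) (Fin k) ℝ) :
    FGWq q α a c C1 C3 h f ≤
      (2 : ℝ) ^ (q - 1) * (FGWq q α a b C1 C2 h g + FGWq q α b c C2 C3 g f) :=
  fgw_relaxed_triangle_inequality_general hq.le hα (hh.couplings_nonempty hg)
    (hg.couplings_nonempty hf) a b c C1 C2 C3
end
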